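/- arXiv:1206.5124 — 4 statements merged into one kernel-verified Lean document; each statement's English description precedes it below -/
import Mathlib

section
/- Let C be an [n,k] linear code over F_q with generator matrix rows w_1,...,w_k. Then the binomial ideal associated to the code equals the ideal generated by the row binomials and the additive-table relations; that is, I(C) = I_2, where I(C) = ⟨x^u − x^v : u,v ∈ ℕ^{n(q−1)}, ∇(u − v) ∈ C⟩ and I_2 = ⟨{x^{▲(α^j w_i)} − 1 : 1 ≤ i ≤ k, 1 ≤ j ≤ q−1} ∪ ⋃_{i=1}^n R(T_+^{(i)})⟩, both ideals of F_2[x_{ij} : 1 ≤ i ≤ n, 1 ≤ j ≤ q−1]. -/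
/-!
Modulo the additive table, `a ↦ x^{▲a}` turns addition in `F ^ n` into multiplication, so
`x^u ≡ x^{▲(∇u)}` for every exponent vector `u`. Hence `I(C)` is generated by the additive table
and the binomials `x^{▲c} - 1` with `c ∈ C`. By multiplicativity it is enough to let `c` run over
a set generating `C` as an additive group, and the multiples `α^j w_i` form such a set.
-/

open MvPolynomial Finset

/-- The set of binomials `R(T₊⁽ⁱ⁾)` (over all blocks `i = 1,…,n`) encoding the additive
table of the finite field `F` with primitive element `α`: for indices `u v w ∈ {1,…,q-1}`,
`x_{iu} x_{iv} - x_{iw}` whenever `α^u + α^v = α^w`, and `x_{iu} x_{iv} - 1` whenever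
`α^u + α^v = 0`.  (The variable `x_{ij}` is indexed by `(i, j)` with `j : Fin (q-1)`
representing the exponent `j+1 ∈ {1,…,q-1}`.) -/
def addRel (F : Type) [Field F] [Fintype F] (n : ℕ) (α : F) :
    Set (MvPolynomial (Fin n × Fin (Fintype.card F - 1)) (ZMod 2)) :=
  {p | ∃ (i : Fin n) (u v w : Fin (Fintype.card F - 1)),
      α ^ (u.1 + 1) + α ^ (v.1 + 1) = α ^ (w.1 + 1) ∧
      p = X (i, u) * X (i, v) - X (i, w)} ∪
  {p | ∃ (i : Fin n) (u v : Fin (Fintype.card F - 1)),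
      α ^ (u.1 + 1) + α ^ (v.1 + 1) = 0 ∧
      p = X (i, u) * X (i, v) - 1}

/-- The squarefree monomial `x^{▲a}` attached to a vector `a ∈ F^n`:
`x^{▲a} = ∏_{i : aᵢ ≠ 0} x_{i jᵢ}` where `aᵢ = α^{jᵢ}`; the discrete logarithm
(base `α`) is supplied as a function `L` on the nonzero elements of `F`. -/
noncomputable def xup (F : Type) [Field F] [Fintype F] [DecidableEq F] (n : ℕ)
    (L : {x : F // x ≠ 0} → Fin (Fintype.card F - 1)) (a : Fin n → F) :
    MvPolynomial (Fin n × Fin (Fintype.card F - 1)) (ZMod 2) :=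
  ∏ i : Fin n, if h : a i ≠ 0 then X (i, L ⟨a i, h⟩) else 1

/-- The binomial ideal `I(C)` associated to a linear code `C ⊆ F^n`:
it is generated by all binomials `x^u - x^v` with `u, v ∈ ℕ^{n(q-1)}` such that
`∇(u - v) ∈ C`, where `∇` maps an exponent vector `(c_{ij})` to the vector of `F^n`
whose `i`-th coordinate is `∑_j c_{ij} α^j`. -/
noncomputable def codeIdeal (F : Type) [Field F] [Fintype F] (n : ℕ) (α : F)
    (C : Submodule F (Fin n → F)) :
    Ideal (MvPolynomial (Fin n × Fin (Fintype.card F - 1)) (ZMod 2)) :=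
  Ideal.span {p | ∃ u v : Fin n × Fin (Fintype.card F - 1) → ℕ,
    (fun i => (∑ j, u (i, j) • α ^ (j.1 + 1)) - ∑ j, v (i, j) • α ^ (j.1 + 1)) ∈ C ∧
    p = (∏ s, X s ^ u s) - ∏ s, X s ^ v s}

/-- The ideal `I₂` generated by the row binomials `x^{▲(αʲ wᵢ)} - 1`
(for the rows `w₁, …, w_k` of a generator matrix and `j = 1, …, q-1`)
together with the additive-table relations `⋃ᵢ R(T₊⁽ⁱ⁾)`. -/
noncomputable def rowIdeal (F : Type) [Field F] [Fintype F] [DecidableEq F] (n k : ℕ) (α : F)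
    (L : {x : F // x ≠ 0} → Fin (Fintype.card F - 1)) (w : Fin k → Fin n → F) :
    Ideal (MvPolynomial (Fin n × Fin (Fintype.card F - 1)) (ZMod 2)) :=
  Ideal.span ({p | ∃ (i : Fin k) (j : Fin (Fintype.card F - 1)),
      p = xup F n L (α ^ (j.1 + 1) • w i) - 1} ∪ addRel F n α)

theorem map_ofAdd_eq_one_of_mem_span {R M S : Type*} [Semiring R] [AddCommMonoid M] [Module R M]
    [MulOneClass S] (φ : Multiplicative M →* S) {s : Set M}
    (hs : ∀ (r : R), ∀ x ∈ s, φ (.ofAdd (r • x)) = 1) {x : M} (hx : x ∈ Submodule.span R s) :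
    φ (.ofAdd x) = 1 := by
  induction hx using Submodule.closure_induction with
  | zero => exact map_one φ
  | add x y _ _ hx hy => rw [ofAdd_add, map_mul, hx, hy, one_mul]
  | smul_mem r x hx => exact hs r x hx

theorem prod_X_pow_single {σ R : Type*} [Fintype σ] [DecidableEq σ] [CommSemiring R] (t : σ) :
    ∏ s, (X s : MvPolynomial σ R) ^ (Pi.single t 1 : σ → ℕ) s = X t := by
  simp only [Pi.single_apply, pow_ite, pow_one, pow_zero, prod_ite_eq', mem_univ, if_true]

theorem prod_X_pow_add {σ R : Type*} [Fintype σ] [CommSemiring R] (u v : σ → ℕ) :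
    ∏ s, (X s : MvPolynomial σ R) ^ (u + v) s = (∏ s, X s ^ u s) * ∏ s, X s ^ v s := by
  simp only [Pi.add_apply, pow_add, prod_mul_distrib]

section CodeIdeal

variable {F : Type} [Field F] [Fintype F] {n k : ℕ} {α : F}
  {L : {x : F // x ≠ 0} → Fin (Fintype.card F - 1)}

/-- `L` is the discrete logarithm to base `α`. The index `L x : Fin (q - 1)` stands for the
exponent `L x + 1 ∈ {1, …, q - 1}`. -/
def IsDiscreteLog (α : F) (L : {x : F // x ≠ 0} → Fin (Fintype.card F - 1)) : Prop :=
  ∀ x, α ^ ((L x).1 + 1) = x.1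

namespace IsDiscreteLog

theorem base_ne_zero (hL : IsDiscreteLog α L) : α ≠ 0 :=
  ne_zero_pow (Nat.succ_ne_zero _) ((hL ⟨1, one_ne_zero⟩).trans_ne one_ne_zero)

theorem bijective (hL : IsDiscreteLog α L) : Function.Bijective L := by
  classical
  have injective : Function.Injective L := fun x y hxy =>
    Subtype.ext (by rw [← hL x, ← hL y, hxy])
  refine (Fintype.bijective_iff_injective_and_card L).2 ⟨injective, ?_⟩
  rw [Fintype.card_fin]
  exact Set.card_ne_eq 0

theorem log_pow (hL : IsDiscreteLog α L) (j : Fin (Fintype.card F - 1))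
    (hj : α ^ (j.1 + 1) ≠ 0) : L ⟨α ^ (j.1 + 1), hj⟩ = j := by
  obtain ⟨x, rfl⟩ := hL.bijective.surjective j
  exact congrArg L (Subtype.ext (hL x))

end IsDiscreteLog

/-- The map `∇`, restricted to exponent vectors with natural number entries: it sends the basis
vector at `(i, j)` to the vector with `i`-th coordinate `α ^ (j + 1)` and zeros elsewhere. -/
def nabla (n : ℕ) (α : F) : (Fin n × Fin (Fintype.card F - 1) → ℕ) →ₗ[ℕ] (Fin n → F) :=
  Fintype.linearCombination ℕ fun s => Pi.single s.1 (α ^ (s.2.1 + 1))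

theorem nabla_single (i : Fin n) (j : Fin (Fintype.card F - 1)) :
    nabla n α (Pi.single (i, j) 1) = Pi.single i (α ^ (j.1 + 1)) := by
  rw [nabla, Fintype.linearCombination_apply_single, one_smul]

theorem nabla_apply (u : Fin n × Fin (Fintype.card F - 1) → ℕ) (i : Fin n) :
    nabla n α u i = ∑ j, u (i, j) • α ^ (j.1 + 1) := by
  simp only [nabla, Fintype.linearCombination_apply, Finset.sum_apply, Pi.smul_apply,
    Fintype.sum_prod_type_right, Pi.single_apply, smul_ite, smul_zero, sum_ite_eq, mem_univ,
    if_true]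

theorem codeIdeal_eq_span_nabla (C : Submodule F (Fin n → F)) :
    codeIdeal F n α C = Ideal.span {p | ∃ u v : Fin n × Fin (Fintype.card F - 1) → ℕ,
      nabla n α u - nabla n α v ∈ C ∧ p = (∏ s, X s ^ u s) - ∏ s, X s ^ v s} := by
  have sub_eq (u v : Fin n × Fin (Fintype.card F - 1) → ℕ) :
      nabla n α u - nabla n α v =
        fun i => (∑ j, u (i, j) • α ^ (j.1 + 1)) - ∑ j, v (i, j) • α ^ (j.1 + 1) :=
    funext fun i => by rw [Pi.sub_apply, nabla_apply, nabla_apply]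
  simp only [codeIdeal, sub_eq]

theorem sub_mem_codeIdeal {C : Submodule F (Fin n → F)}
    {u v : Fin n × Fin (Fintype.card F - 1) → ℕ} (h : nabla n α u - nabla n α v ∈ C) :
    (∏ s, X s ^ u s) - ∏ s, X s ^ v s ∈ codeIdeal F n α C :=
  codeIdeal_eq_span_nabla C ▸ Ideal.subset_span ⟨u, v, h, rfl⟩

theorem sub_one_mem_codeIdeal {C : Submodule F (Fin n → F)}
    {u : Fin n × Fin (Fintype.card F - 1) → ℕ} (h : nabla n α u ∈ C) :
    (∏ s, X s ^ u s) - 1 ∈ codeIdeal F n α C := by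
  have mem := sub_mem_codeIdeal (u := u) (v := 0) (by rwa [map_zero, sub_zero])
  simpa only [Pi.zero_apply, pow_zero, prod_const_one] using mem

theorem addRel_subset_codeIdeal (C : Submodule F (Fin n → F)) :
    addRel F n α ⊆ codeIdeal F n α C := by
  have nabla_pair (i : Fin n) (a b : Fin (Fintype.card F - 1)) :
      nabla n α (Pi.single (i, a) 1 + Pi.single (i, b) 1) =
        Pi.single i (α ^ (a.1 + 1) + α ^ (b.1 + 1)) := by
    rw [map_add, nabla_single, nabla_single, Pi.single_add]
  rintro _ (⟨i, a, b, c, h, rfl⟩ | ⟨i, a, b, h, rfl⟩)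
  · rw [← prod_X_pow_single (i, a), ← prod_X_pow_single (i, b), ← prod_X_pow_single (i, c),
      ← prod_X_pow_add]
    refine sub_mem_codeIdeal ?_
    rw [nabla_pair, h, nabla_single, sub_self]
    exact C.zero_mem
  · rw [← prod_X_pow_single (i, a), ← prod_X_pow_single (i, b), ← prod_X_pow_add]
    refine sub_one_mem_codeIdeal ?_
    rw [nabla_pair, h, Pi.single_zero]
    exact C.zero_mem

variable [DecidableEq F]

/-- The characteristic crossing function `▲`, taking values in exponent vectors: block `i` of
`▲a` is the basis vector at the logarithm of `a i`, or zero if `a i = 0`. -/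
def crossing (L : {x : F // x ≠ 0} → Fin (Fintype.card F - 1)) (a : Fin n → F) :
    Fin n × Fin (Fintype.card F - 1) → ℕ :=
  ∑ i, if h : a i ≠ 0 then Pi.single (i, L ⟨a i, h⟩) 1 else 0

theorem nabla_crossing (hL : IsDiscreteLog α L) (a : Fin n → F) :
    nabla n α (crossing L a) = a := by
  rw [crossing, map_sum]
  conv_rhs => rw [← univ_sum_single a]
  refine sum_congr rfl fun i _ => ?_
  split_ifs with h
  · rw [nabla_single, hL]
  · rw [map_zero, not_not.1 h, Pi.single_zero]

theorem prod_X_pow_crossing (a : Fin n → F) : ∏ s, X s ^ crossing L a s = xup F n L a := by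
  simp only [crossing, Finset.sum_apply, ← prod_pow_eq_pow_sum]
  rw [prod_comm, xup]
  refine prod_congr rfl fun i _ => ?_
  split_ifs
  · exact prod_X_pow_single _
  · simp only [Pi.zero_apply, pow_zero, prod_const_one]

theorem xup_sub_one_mem_codeIdeal (hL : IsDiscreteLog α L) {C : Submodule F (Fin n → F)}
    {a : Fin n → F} (ha : a ∈ C) : xup F n L a - 1 ∈ codeIdeal F n α C := by
  rw [← prod_X_pow_crossing]
  exact sub_one_mem_codeIdeal (by rwa [nabla_crossing hL])

/-- The factor of `x^{▲a}` contributed by the `i`-th coordinate of `a`, as a function of the value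
`x` of that coordinate: the variable at the logarithm of `x`, or `1` if `x = 0`. -/
noncomputable def coordMonomial (L : {x : F // x ≠ 0} → Fin (Fintype.card F - 1)) (i : Fin n)
    (x : F) : MvPolynomial (Fin n × Fin (Fintype.card F - 1)) (ZMod 2) :=
  if h : x ≠ 0 then X (i, L ⟨x, h⟩) else 1

theorem coordMonomial_zero (i : Fin n) : coordMonomial L i 0 = 1 :=
  dif_neg (not_not.2 rfl)

theorem coordMonomial_of_ne_zero (i : Fin n) {x : F} (hx : x ≠ 0) :
    coordMonomial L i x = X (i, L ⟨x, hx⟩) :=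
  dif_pos hx

theorem xup_eq_prod_coordMonomial (a : Fin n → F) :
    xup F n L a = ∏ i, coordMonomial L i (a i) := rfl

theorem xup_zero : xup F n L 0 = 1 := by
  simp only [xup_eq_prod_coordMonomial, Pi.zero_apply, coordMonomial_zero, prod_const_one]

theorem xup_single_pow (hL : IsDiscreteLog α L) (i : Fin n) (j : Fin (Fintype.card F - 1)) :
    xup F n L (Pi.single i (α ^ (j.1 + 1))) = X (i, j) := by
  rw [xup_eq_prod_coordMonomial, Fintype.prod_eq_single i fun i' hi' => by
    rw [Pi.single_eq_of_ne hi', coordMonomial_zero]]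
  rw [Pi.single_eq_same, coordMonomial_of_ne_zero i (pow_ne_zero _ hL.base_ne_zero), hL.log_pow]

section AdditiveTable

variable {I : Ideal (MvPolynomial (Fin n × Fin (Fintype.card F - 1)) (ZMod 2))}

theorem mk_coordMonomial_add (hL : IsDiscreteLog α L) (hI : addRel F n α ⊆ I) (i : Fin n)
    (x y : F) :
    Ideal.Quotient.mk I (coordMonomial L i (x + y)) =
      Ideal.Quotient.mk I (coordMonomial L i x) * Ideal.Quotient.mk I (coordMonomial L i y) := by
  rcases eq_or_ne x 0 with rfl | hx
  · rw [zero_add, coordMonomial_zero, map_one, one_mul]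
  rcases eq_or_ne y 0 with rfl | hy
  · rw [add_zero, coordMonomial_zero, map_one, mul_one]
  rw [← map_mul, eq_comm, Ideal.Quotient.eq, coordMonomial_of_ne_zero i hx,
    coordMonomial_of_ne_zero i hy]
  by_cases hxy : x + y = 0
  · rw [hxy, coordMonomial_zero]
    exact hI (.inr ⟨i, _, _, by rw [hL, hL, hxy], rfl⟩)
  · rw [coordMonomial_of_ne_zero i hxy]
    exact hI (.inl ⟨i, _, _, _, by rw [hL, hL, hL], rfl⟩)

/-- The homomorphism `a ↦ x^{▲a}` from the additive group `F ^ n` to the quotient of the polynomial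
ring by an ideal containing the additive table. -/
noncomputable def xupHom (hL : IsDiscreteLog α L) (hI : addRel F n α ⊆ I) :
    Multiplicative (Fin n → F) →*
      MvPolynomial (Fin n × Fin (Fintype.card F - 1)) (ZMod 2) ⧸ I where
  toFun a := Ideal.Quotient.mk I (xup F n L a.toAdd)
  map_one' := by rw [toAdd_one, xup_zero, map_one]
  map_mul' a b := by
    simp only [xup_eq_prod_coordMonomial, map_prod, toAdd_mul, Pi.add_apply,
      mk_coordMonomial_add hL hI, prod_mul_distrib]

theorem xupHom_ofAdd (hL : IsDiscreteLog α L) (hI : addRel F n α ⊆ I) (a : Fin n → F) :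
    xupHom hL hI (.ofAdd a) = Ideal.Quotient.mk I (xup F n L a) := rfl

theorem xupHom_ofAdd_eq_one_iff (hL : IsDiscreteLog α L) (hI : addRel F n α ⊆ I)
    (a : Fin n → F) : xupHom hL hI (.ofAdd a) = 1 ↔ xup F n L a - 1 ∈ I := by
  rw [xupHom_ofAdd, ← map_one (Ideal.Quotient.mk I), Ideal.Quotient.eq]

theorem xupHom_nabla (hL : IsDiscreteLog α L) (hI : addRel F n α ⊆ I)
    (u : Fin n × Fin (Fintype.card F - 1) → ℕ) :
    xupHom hL hI (.ofAdd (nabla n α u)) = Ideal.Quotient.mk I (∏ s, X s ^ u s) := by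
  simp only [nabla, Fintype.linearCombination_apply, ofAdd_sum, ofAdd_nsmul, map_prod, map_pow,
    xupHom_ofAdd, xup_single_pow hL]

theorem codeIdeal_le (hL : IsDiscreteLog α L) (hI : addRel F n α ⊆ I)
    {C : Submodule F (Fin n → F)} (hC : ∀ a ∈ C, xup F n L a - 1 ∈ I) :
    codeIdeal F n α C ≤ I := by
  rw [codeIdeal_eq_span_nabla, Ideal.span_le]
  rintro _ ⟨u, v, huv, rfl⟩
  rw [SetLike.mem_coe, ← Ideal.Quotient.eq, ← xupHom_nabla hL hI, ← xupHom_nabla hL hI]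
  calc xupHom hL hI (.ofAdd (nabla n α u))
      = xupHom hL hI (.ofAdd (nabla n α u - nabla n α v)) *
          xupHom hL hI (.ofAdd (nabla n α v)) := by
        rw [← map_mul, ← ofAdd_add, sub_add_cancel]
    _ = xupHom hL hI (.ofAdd (nabla n α v)) := by
        rw [(xupHom_ofAdd_eq_one_iff hL hI _).2 (hC _ huv), one_mul]

theorem xup_sub_one_mem_of_mem_span (hL : IsDiscreteLog α L) (hI : addRel F n α ⊆ I)
    {s : Set (Fin n → F)}
    (hs : ∀ j : Fin (Fintype.card F - 1), ∀ a ∈ s, xup F n L (α ^ (j.1 + 1) • a) - 1 ∈ I)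
    {a : Fin n → F} (ha : a ∈ Submodule.span F s) : xup F n L a - 1 ∈ I := by
  rw [← xupHom_ofAdd_eq_one_iff hL hI]
  refine map_ofAdd_eq_one_of_mem_span _ (fun c b hb => ?_) ha
  rw [xupHom_ofAdd_eq_one_iff]
  rcases eq_or_ne c 0 with rfl | hc
  · rw [zero_smul, xup_zero, sub_self]
    exact I.zero_mem
  · have mem := hs (L ⟨c, hc⟩) b hb
    rwa [hL] at mem

end AdditiveTable

theorem code_ideal_eq_row_ideal_general (hL : IsDiscreteLog α L) (w : Fin k → Fin n → F) :
    codeIdeal F n α (Submodule.span F (Set.range w)) = rowIdeal F n k α L w := by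
  apply le_antisymm
  · have addRel_subset : addRel F n α ⊆ rowIdeal F n k α L w :=
      Set.subset_union_right.trans Ideal.subset_span
    refine codeIdeal_le hL addRel_subset fun a ha =>
      xup_sub_one_mem_of_mem_span hL addRel_subset ?_ ha
    rintro j _ ⟨i, rfl⟩
    exact Ideal.subset_span (.inl ⟨i, j, rfl⟩)
  · refine Ideal.span_le.2 (Set.union_subset ?_ (addRel_subset_codeIdeal _))
    rintro _ ⟨i, j, rfl⟩
    exact xup_sub_one_mem_codeIdeal hL
      (Submodule.smul_mem _ _ (Submodule.subset_span ⟨i, rfl⟩))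

end CodeIdeal

/-- Let `C` be an `[n,k]` linear code over `F = F_q` with generator matrix
rows `w₁, …, w_k`, where `α` is a primitive element of `F` (every nonzero element of `F`
is `α^{j}` for a `j ∈ {1,…,q-1}`, and `L` is the discrete logarithm).  Then the binomial
ideal associated to the code equals the ideal generated by the row binomials and the
additive-table relations: `I(C) = I₂`. -/
theorem code_ideal_eq_row_ideal
    (F : Type) [Field F] [Fintype F] [DecidableEq F] (n k : ℕ) (hn : 0 < n) (α : F)
    (L : {x : F // x ≠ 0} → Fin (Fintype.card F - 1))
    (hL : ∀ x : {x : F // x ≠ 0}, α ^ ((L x).1 + 1) = x.1)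
    (C : Submodule F (Fin n → F)) (w : Fin k → Fin n → F)
    (hw : Submodule.span F (Set.range w) = C)
    (hdim : Module.finrank F C = k) :
    codeIdeal F n α C = rowIdeal F n k α L w :=
  hw ▸ code_ideal_eq_row_ideal_general hL w
end

section
/- Every monomial of F_2[x_{ij} : 1 ≤ i ≤ n, 1 ≤ j ≤ q−1] is congruent modulo the relations ideal to its squarefree normal form with at most one variable per coordinate block: for every exponent vector c ∈ ℕ^{n(q−1)}, the binomial x^c − x^{▲(∇c)} belongs to J = ⟨⋃_{i=1}^n R(T_+^{(i)})⟩. In particular every monomial is congruent modulo J to a monomial of total degree at most n. -/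
open MvPolynomial Finset

/-!
Modulo `J`, the relations in block `i` say exactly that sending `a : F` to its block monomial
(`x_{ij}` if `a = α ^ j`, and `1` if `a = 0`) turns addition into multiplication. Each variable
`x_{ij}` is the block monomial of `α ^ j`, so the part of `x ^ c` in block `i` is congruent to the
block monomial of `∑ j, c_{ij} α ^ j`.
-/

section DiscreteLog

variable {M : Type*} [MonoidWithZero M] [Fintype M] {α : M}
  {L : {x : M // x ≠ 0} → Fin (Fintype.card M - 1)}

theorem discreteLog_bijective (hL : ∀ x, α ^ ((L x).1 + 1) = x.1) : Function.Bijective L := by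
  classical
  have hL_inj : Function.Injective L := fun x y hxy => Subtype.ext <| by rw [← hL x, ← hL y, hxy]
  exact (Fintype.bijective_iff_injective_and_card L).2
    ⟨hL_inj, by simp [Fintype.card_subtype_compl]⟩

theorem exists_discreteLog_eq (hL : ∀ x, α ^ ((L x).1 + 1) = x.1)
    (j : Fin (Fintype.card M - 1)) :
    ∃ h : α ^ (j.1 + 1) ≠ 0, L ⟨α ^ (j.1 + 1), h⟩ = j := by
  obtain ⟨x, rfl⟩ := (discreteLog_bijective hL).surjective j
  exact ⟨hL x ▸ x.2, congrArg L (Subtype.ext (hL x))⟩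

end DiscreteLog

section BlockMonomial

variable {A ι κ R : Type*} [Zero A] [DecidableEq A] [CommSemiring R]

variable (R) in
/-- The factor of the normal form `x^{▲a}` in the block `i`, as a function of the coordinate
`a` of the vector: the variable `x_{i, L a}` if `a ≠ 0`, and `1` if `a = 0`. -/
noncomputable def blockMonomial (L : {x : A // x ≠ 0} → κ) (i : ι) (a : A) :
    MvPolynomial (ι × κ) R :=
  if h : a ≠ 0 then X (i, L ⟨a, h⟩) else 1

variable (L : {x : A // x ≠ 0} → κ) (i : ι)

@[simp]
theorem blockMonomial_zero : blockMonomial R L i 0 = 1 := by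
  simp [blockMonomial]

theorem blockMonomial_of_ne_zero {a : A} (ha : a ≠ 0) :
    blockMonomial R L i a = X (i, L ⟨a, ha⟩) :=
  dif_pos ha

theorem totalDegree_blockMonomial_le_one (a : A) : (blockMonomial R L i a).totalDegree ≤ 1 := by
  by_cases ha : a = 0
  · simp [ha]
  · rw [blockMonomial_of_ne_zero L i ha]
    exact (totalDegree_monomial_le _ _).trans (by simp)

end BlockMonomial

theorem blockMonomial_pow {M ι R : Type*} [MonoidWithZero M] [Fintype M] [DecidableEq M]
    [CommSemiring R] {α : M} {L : {x : M // x ≠ 0} → Fin (Fintype.card M - 1)}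
    (hL : ∀ x, α ^ ((L x).1 + 1) = x.1) (i : ι) (j : Fin (Fintype.card M - 1)) :
    blockMonomial R L i (α ^ (j.1 + 1)) = X (i, j) := by
  obtain ⟨hj, hLj⟩ := exists_discreteLog_eq hL j
  rw [blockMonomial_of_ne_zero L i hj, hLj]

section NormalForm

variable {F : Type} [Field F] [Fintype F] [DecidableEq F] {n : ℕ} {α : F}
  {L : {x : F // x ≠ 0} → Fin (Fintype.card F - 1)}

theorem xup_eq_prod_blockMonomial (a : Fin n → F) :
    xup F n L a = ∏ i, blockMonomial (ZMod 2) L i (a i) :=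
  rfl

theorem totalDegree_xup_le (a : Fin n → F) : (xup F n L a).totalDegree ≤ n :=
  calc (xup F n L a).totalDegree
      ≤ ∑ i, (blockMonomial (ZMod 2) L i (a i)).totalDegree := totalDegree_finsetProd _ _
    _ ≤ ∑ _i : Fin n, 1 := Finset.sum_le_sum fun i _ => totalDegree_blockMonomial_le_one L i (a i)
    _ = n := by simp

theorem blockMonomial_mul_sub_blockMonomial_add_mem (hL : ∀ x, α ^ ((L x).1 + 1) = x.1)
    (i : Fin n) (a b : F) :
    blockMonomial (ZMod 2) L i a * blockMonomial (ZMod 2) L i b - blockMonomial (ZMod 2) L i (a + b)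
      ∈ Ideal.span (addRel F n α) := by
  by_cases ha : a = 0
  · simp [ha]
  by_cases hb : b = 0
  · simp [hb]
  apply Ideal.subset_span
  rw [blockMonomial_of_ne_zero L i ha, blockMonomial_of_ne_zero L i hb]
  by_cases hab : a + b = 0
  · rw [hab, blockMonomial_zero]
    exact Or.inr ⟨i, L ⟨a, ha⟩, L ⟨b, hb⟩, by rw [hL, hL, hab], rfl⟩
  · rw [blockMonomial_of_ne_zero L i hab]
    exact Or.inl ⟨i, L ⟨a, ha⟩, L ⟨b, hb⟩, L ⟨a + b, hab⟩, by rw [hL, hL, hL], rfl⟩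

/-- The block monomial of the block `i`, reduced modulo the relations ideal, as a character of the
additive group of `F` (written multiplicatively) with values in the quotient ring. -/
noncomputable def blockCharacter (hL : ∀ x, α ^ ((L x).1 + 1) = x.1) (i : Fin n) :
    Multiplicative F →*
      MvPolynomial (Fin n × Fin (Fintype.card F - 1)) (ZMod 2) ⧸ Ideal.span (addRel F n α) where
  toFun a := Ideal.Quotient.mk _ (blockMonomial (ZMod 2) L i a.toAdd)
  map_one' := by simp
  map_mul' a b := by
    rw [← map_mul, toAdd_mul]
    exact (Ideal.Quotient.eq.2
      (blockMonomial_mul_sub_blockMonomial_add_mem hL i a.toAdd b.toAdd)).symm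

theorem blockCharacter_ofAdd (hL : ∀ x, α ^ ((L x).1 + 1) = x.1) (i : Fin n) (a : F) :
    blockCharacter hL i (.ofAdd a) = Ideal.Quotient.mk _ (blockMonomial (ZMod 2) L i a) :=
  rfl

theorem mk_prod_X_pow_eq_mk_blockMonomial (hL : ∀ x, α ^ ((L x).1 + 1) = x.1) (i : Fin n)
    (c : Fin (Fintype.card F - 1) → ℕ) :
    Ideal.Quotient.mk (Ideal.span (addRel F n α)) (∏ j, X (i, j) ^ c j) =
      Ideal.Quotient.mk _ (blockMonomial (ZMod 2) L i (∑ j, c j • α ^ (j.1 + 1))) := by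
  simp only [← blockCharacter_ofAdd hL, ofAdd_sum, ofAdd_nsmul, map_prod, map_pow]
  simp only [blockCharacter_ofAdd, blockMonomial_pow hL]

end NormalForm

/-- Every monomial of `F₂[x_{ij}]` is congruent modulo the relations ideal
to its squarefree normal form with at most one variable per coordinate block: for every
exponent vector `c ∈ ℕ^{n(q-1)}`, the binomial `x^c − x^{▲(∇c)}` belongs to
`J = ⟨⋃ᵢ R(T₊⁽ⁱ⁾)⟩`.  In particular every monomial is congruent modulo `J` to a
monomial of total degree at most `n`. -/
theorem monomial_sub_normalForm_mem
    (F : Type) [Field F] [Fintype F] [DecidableEq F] (n : ℕ) (hn : 0 < n) (α : F)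
    (L : {x : F // x ≠ 0} → Fin (Fintype.card F - 1))
    (hL : ∀ x : {x : F // x ≠ 0}, α ^ ((L x).1 + 1) = x.1)
    (c : Fin n × Fin (Fintype.card F - 1) → ℕ) :
    ((∏ s, X s ^ c s) - xup F n L (fun i => ∑ j, c (i, j) • α ^ (j.1 + 1))
        ∈ Ideal.span (addRel F n α))
    ∧ (xup F n L (fun i => ∑ j, c (i, j) • α ^ (j.1 + 1))).totalDegree ≤ n := by
  refine ⟨?_, totalDegree_xup_le _⟩
  rw [← Ideal.Quotient.eq, Fintype.prod_prod_type, xup_eq_prod_blockMonomial, map_prod, map_prod]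
  exact Finset.prod_congr rfl fun i _ => mk_prod_X_pow_eq_mk_blockMonomial hL i fun j => c (i, j)
end

section
/- The ideal generated by the additive-table relations of all blocks equals the full binomial ideal of the crossing map: ⟨⋃_{i=1}^n R(T_+^{(i)})⟩ = ⟨x^u − x^v : u, v ∈ ℕ^{n(q−1)}, ∇u = ∇v⟩ as ideals of F_2[x_{ij} : 1 ≤ i ≤ n, 1 ≤ j ≤ q−1]. (This is the case C = {0} of the identification of the code ideal with the ideal generated by row binomials and relations.) -/
open MvPolynomial Finset

/-!
Fix an abelian group `M`, a family `e : κ → M` hitting every nonzero element, and one block of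
variables `X j`. Modulo the addition-table binomials, `X j` depends only on `e j`: if `e j = 0` then
`X j` is an idempotent with square `1`, and otherwise `X j` is the inverse of any `X k` with
`e k = -e j`. Hence `e j ↦ X j` extends to a homomorphism from `M` to the multiplicative monoid of
the quotient ring. Multiplying these homomorphisms over the blocks, the class of a monomial `x^u`
is a function of `∇u` alone, so all binomials `x^u - x^v` with `∇u = ∇v` vanish in the quotient.
-/

/-- The family `y` satisfies, in multiplicative notation, every relation `e u + e v = e w` and
`e u + e v = 0` of the addition table of the family `e`. -/
structure RespectsAddTable {κ M A : Type*} [AddZeroClass M] [MulOneClass A]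
    (e : κ → M) (y : κ → A) : Prop where
  mul_eq : ∀ u v w, e u + e v = e w → y u * y v = y w
  mul_eq_one : ∀ u v, e u + e v = 0 → y u * y v = 1

namespace RespectsAddTable

variable {κ M A : Type*} [Monoid A] {e : κ → M} {y : κ → A}

theorem eq_one_of_eq_zero [AddZeroClass M] (h : RespectsAddTable e y) {j : κ} (hj : e j = 0) :
    y j = 1 :=
  calc
    y j = y j * y j := (h.mul_eq j j j (by rw [hj, add_zero])).symm
    _ = 1 := h.mul_eq_one j j (by rw [hj, add_zero])

variable [AddGroup M]

theorem congr (h : RespectsAddTable e y) (he : ∀ x ≠ 0, ∃ j, e j = x) {j k : κ}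
    (hjk : e j = e k) : y j = y k := by
  by_cases hj : e j = 0
  · rw [h.eq_one_of_eq_zero hj, h.eq_one_of_eq_zero (hjk ▸ hj)]
  · obtain ⟨l, hl⟩ := he (-e j) (neg_ne_zero.mpr hj)
    have right_inv : y j * y l = 1 := h.mul_eq_one j l (by rw [hl, add_neg_cancel])
    have left_inv : y l * y k = 1 := h.mul_eq_one l k (by rw [hl, hjk, neg_add_cancel])
    exact left_inv_eq_right_inv right_inv left_inv

theorem exists_monoidHom (h : RespectsAddTable e y) (he : ∀ x ≠ 0, ∃ j, e j = x) :
    ∃ f : Multiplicative M →* A, ∀ j, f (Multiplicative.ofAdd (e j)) = y j := by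
  have exists_value (x : M) : ∃ a, (x = 0 → a = 1) ∧ ∀ j, e j = x → y j = a := by
    by_cases hx : x = 0
    · exact ⟨1, fun _ => rfl, fun j hj => h.eq_one_of_eq_zero (hj.trans hx)⟩
    · obtain ⟨k, hk⟩ := he x hx
      exact ⟨y k, fun hx' => absurd hx' hx, fun j hj => h.congr he (hj.trans hk.symm)⟩
  choose f f_eq_one f_eq using exists_value
  have f_zero : f 0 = 1 := f_eq_one 0 rfl
  have f_add (a b : M) : f (a + b) = f a * f b := by
    by_cases ha : a = 0
    · rw [ha, zero_add, f_zero, one_mul]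
    by_cases hb : b = 0
    · rw [hb, add_zero, f_zero, mul_one]
    obtain ⟨u, hu⟩ := he a ha
    obtain ⟨v, hv⟩ := he b hb
    rw [← f_eq a u hu, ← f_eq b v hv]
    by_cases hab : a + b = 0
    · rw [f_eq_one _ hab, h.mul_eq_one u v (by rw [hu, hv, hab])]
    · obtain ⟨w, hw⟩ := he (a + b) hab
      rw [← f_eq _ w hw, h.mul_eq u v w (by rw [hu, hv, hw])]
  exact ⟨{ toFun := fun x => f x.toAdd, map_one' := f_zero, map_mul' := fun a b => f_add _ _ },
    fun j => (f_eq (e j) j rfl).symm⟩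

end RespectsAddTable

/-- The crossing map `∇` for the family `e`: it sends an exponent vector `u` with entries indexed
by `ι × κ` to the vector with `i`-th coordinate `∑ j, u (i, j) • e j`. Exponent vectors are
finitely supported, so that the sums make sense for infinite `κ`. -/
noncomputable def crossingMap (ι : Type*) {κ M : Type*} [AddCommMonoid M] (e : κ → M)
    (u : ι × κ →₀ ℕ) : ι →₀ M :=
  u.sum fun s k => Finsupp.single s.1 (k • e s.2)

section CrossingMap

variable {ι κ M : Type*} [AddCommMonoid M] (e : κ → M)

theorem crossingMap_add (u v : ι × κ →₀ ℕ) :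
    crossingMap ι e (u + v) = crossingMap ι e u + crossingMap ι e v :=
  Finsupp.sum_add_index' (fun s => by rw [zero_smul, Finsupp.single_zero])
    fun s k l => by rw [add_smul, Finsupp.single_add]

theorem crossingMap_zero : crossingMap ι e 0 = 0 :=
  Finsupp.sum_zero_index

theorem crossingMap_single (i : ι) (j : κ) (k : ℕ) :
    crossingMap ι e (Finsupp.single (i, j) k) = Finsupp.single i (k • e j) :=
  Finsupp.sum_single_index (by rw [zero_smul, Finsupp.single_zero])

theorem crossingMap_apply [Fintype κ] (u : ι × κ →₀ ℕ) (i : ι) :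
    crossingMap ι e u i = ∑ j, u (i, j) • e j := by
  classical
  induction u using Finsupp.induction_linear with
  | zero => simp only [crossingMap_zero, Finsupp.zero_apply, zero_smul, Finset.sum_const_zero]
  | add u v hu hv =>
    simp only [crossingMap_add, Finsupp.add_apply, add_smul, Finset.sum_add_distrib, hu, hv]
  | single s k =>
    obtain ⟨i', j'⟩ := s
    rw [crossingMap_single]
    by_cases hi : i' = i <;> simp [Finsupp.single_apply, hi, ite_smul]

end CrossingMap

theorem prod_pow_eq_of_crossingMap_eq {ι κ M A : Type*} [AddCommGroup M] [CommMonoid A]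
    {e : κ → M} (he : ∀ x ≠ 0, ∃ j, e j = x) {y : ι × κ → A}
    (hy : ∀ i, RespectsAddTable e fun j => y (i, j)) {u v : ι × κ →₀ ℕ}
    (huv : crossingMap ι e u = crossingMap ι e v) :
    (u.prod fun s k => y s ^ k) = v.prod fun s k => y s ^ k := by
  choose f hf using fun i => (hy i).exists_monoidHom he
  have prod_eq (w : ι × κ →₀ ℕ) : (w.prod fun s k => y s ^ k) =
      (crossingMap ι e w).prod fun i x => f i (Multiplicative.ofAdd x) := by
    rw [crossingMap, Finsupp.prod_sum_index (fun i => by rw [ofAdd_zero, map_one])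
      fun i a b => by rw [ofAdd_add, map_mul]]
    refine Finsupp.prod_congr fun s _ => ?_
    rw [Finsupp.prod_single_index (by rw [ofAdd_zero, map_one]), ofAdd_nsmul, map_pow, hf]
  rw [prod_eq, prod_eq, huv]

/-- The binomials encoding the addition table of the family `e`, with one block of variables
`X (i, ·)` for every `i : ι`; `addRel` is the case of the powers of a primitive element, over
`ZMod 2`. -/
def addTableBinomials (R ι : Type*) {κ M : Type*} [CommRing R] [AddZeroClass M] (e : κ → M) :
    Set (MvPolynomial (ι × κ) R) :=
  {p | ∃ i u v w, e u + e v = e w ∧ p = X (i, u) * X (i, v) - X (i, w)} ∪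
  {p | ∃ i u v, e u + e v = 0 ∧ p = X (i, u) * X (i, v) - 1}

/-- The pure difference binomials `x^u - x^v` whose exponent vectors lie in the same fibre of `d`;
for `d` the crossing map they generate its lattice ideal. -/
def fiberBinomials (R : Type*) {σ N : Type*} [CommRing R] (d : (σ →₀ ℕ) → N) :
    Set (MvPolynomial σ R) :=
  {p | ∃ u v, d u = d v ∧ p = monomial u 1 - monomial v 1}

section Binomials

variable (R ι : Type*) {κ M : Type*} [CommRing R]

theorem addTableBinomials_subset_fiberBinomials [AddCommMonoid M] (e : κ → M) :
    addTableBinomials R ι e ⊆ fiberBinomials R (crossingMap ι e) := by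
  rintro p (⟨i, u, v, w, h, rfl⟩ | ⟨i, u, v, h, rfl⟩)
  · refine ⟨Finsupp.single (i, u) 1 + Finsupp.single (i, v) 1, Finsupp.single (i, w) 1, ?_, ?_⟩
    · simp only [crossingMap_add, crossingMap_single, one_smul, ← Finsupp.single_add, h]
    · simp only [X, monomial_mul, one_mul]
  · refine ⟨Finsupp.single (i, u) 1 + Finsupp.single (i, v) 1, 0, ?_, ?_⟩
    · simp only [crossingMap_add, crossingMap_single, one_smul, ← Finsupp.single_add, h,
        Finsupp.single_zero, crossingMap_zero]
    · simp only [X, monomial_mul, one_mul, monomial_zero', C_1]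

theorem respectsAddTable_mk_X [AddZeroClass M] (e : κ → M) (i : ι) :
    RespectsAddTable e fun j =>
      Ideal.Quotient.mk (Ideal.span (addTableBinomials R ι e)) (X (i, j)) where
  mul_eq u v w h := by
    rw [← map_mul, Ideal.Quotient.eq]
    exact Ideal.subset_span (Or.inl ⟨i, u, v, w, h, rfl⟩)
  mul_eq_one u v h := by
    rw [← map_mul, ← map_one (Ideal.Quotient.mk _), Ideal.Quotient.eq]
    exact Ideal.subset_span (Or.inr ⟨i, u, v, h, rfl⟩)

theorem fiberBinomials_subset_span_addTableBinomials [AddCommGroup M] {e : κ → M}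
    (he : ∀ x ≠ 0, ∃ j, e j = x) :
    fiberBinomials R (crossingMap ι e) ⊆ Ideal.span (addTableBinomials R ι e) := by
  rintro p ⟨u, v, huv, rfl⟩
  rw [SetLike.mem_coe, ← Ideal.Quotient.eq]
  simp only [monomial_eq, C_1, one_mul, map_finsuppProd, map_pow]
  exact prod_pow_eq_of_crossingMap_eq he (respectsAddTable_mk_X R ι e) huv

theorem fiberBinomials_crossingMap_eq [Fintype ι] [Fintype κ] [AddCommMonoid M] (e : κ → M) :
    fiberBinomials R (crossingMap ι e) =
      {p | ∃ u v : ι × κ → ℕ,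
        (fun i => ∑ j, u (i, j) • e j) = (fun i => ∑ j, v (i, j) • e j) ∧
        p = (∏ s, X s ^ u s) - ∏ s, X s ^ v s} := by
  have monomial_one_eq (u : ι × κ →₀ ℕ) :
      (monomial u 1 : MvPolynomial (ι × κ) R) = ∏ s, X s ^ u s := by
    rw [monomial_eq, C_1, one_mul, Finsupp.prod_fintype _ _ fun s => pow_zero _]
  ext p
  refine Finsupp.equivFunOnFinite.exists_congr fun u =>
    Finsupp.equivFunOnFinite.exists_congr fun v => and_congr ?_ ?_
  · simp only [DFunLike.ext_iff, crossingMap_apply, funext_iff, Finsupp.equivFunOnFinite_apply]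
  · simp only [monomial_one_eq, Finsupp.equivFunOnFinite_apply]

theorem addRel_span_eq_lattice_ideal_general [AddCommGroup M] {e : κ → M}
    (he : ∀ x ≠ 0, ∃ j, e j = x) :
    Ideal.span (addTableBinomials R ι e) = Ideal.span (fiberBinomials R (crossingMap ι e)) :=
  le_antisymm (Ideal.span_mono (addTableBinomials_subset_fiberBinomials R ι e))
    (Ideal.span_le.mpr (fiberBinomials_subset_span_addTableBinomials R ι he))

end Binomials

/-- The ideal generated by the additive-table relations of all blocks
equals the full binomial ideal of the crossing map:
`⟨⋃ᵢ R(T₊⁽ⁱ⁾)⟩ = ⟨x^u − x^v : u, v ∈ ℕ^{n(q-1)}, ∇u = ∇v⟩`,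
where `∇` maps an exponent vector `(c_{ij})` to the vector of `F^n` whose `i`-th
coordinate is `∑_j c_{ij} α^j`.  (This is the case `C = {0}` of the identification of the
code ideal with the ideal generated by row binomials and relations.) -/
theorem addRel_span_eq_lattice_ideal
    (F : Type) [Field F] [Fintype F] (n : ℕ) (hn : 0 < n) (α : F)
    (hprim : ∀ x : F, x ≠ 0 → ∃ j : Fin (Fintype.card F - 1), α ^ (j.1 + 1) = x) :
    Ideal.span (addRel F n α) =
      Ideal.span {p | ∃ u v : Fin n × Fin (Fintype.card F - 1) → ℕ,
        (fun i => ∑ j, u (i, j) • α ^ (j.1 + 1)) =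
          (fun i => ∑ j, v (i, j) • α ^ (j.1 + 1)) ∧
        p = (∏ s, X s ^ u s) - ∏ s, X s ^ v s} := by
  rw [← fiberBinomials_crossingMap_eq (ZMod 2) (Fin n)
    fun j : Fin (Fintype.card F - 1) => α ^ (j.1 + 1)]
  exact addRel_span_eq_lattice_ideal_general (ZMod 2) (Fin n) hprim
end

section
/- Let φ : F_2[x_{ij} : 1 ≤ i ≤ n, 1 ≤ j ≤ q−1] → F_2[(F_q^n, +)] be the F_2-algebra homomorphism to the group algebra of the additive group F_q^n sending the variable x_{ij} to the group-algebra basis element corresponding to the vector α^j · e_i ∈ F_q^n (e_i the i-th standard basis vector of F_q^n). Then the kernel of φ is exactly the ideal J = ⟨⋃_{i=1}^n R(T_+^{(i)})⟩ generated by the additive-table relations. -/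
open MvPolynomial Finset

/-!
The additive table of a commutative group `M` presents `M`: if the products `y u * y v` follow the
sums `x u + x v`, where `x` runs over the nonzero elements, then `y` comes from a homomorphism on
`M`. The relations alone force `y s = 1` when `x s = 0` and, by invertibility, `y s = y t` when
`x s = x t`. Applied to each block of variables modulo the ideal `J` of the relations, this gives
homomorphisms from `M` to the multiplicative monoid of `R[x_{ij}] ⧸ J`. Their product over the
blocks extends linearly to `ψ : R[ι → M] → R[x_{ij}] ⧸ J`, and `ψ ∘ φ` is the quotient map because
both agree on the variables. Hence `ker φ ≤ J`.
-/

/-- The family `y` multiplies according to the part of the additive table of `M` that involves only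
the elements `x s` and `0`, with `1` standing for `0`. In the application `x` enumerates the nonzero
elements of a finite field and `y` consists of the images of one block of variables. -/
structure RespectsAddTable_s10 {σ M A : Type*} [AddMonoid M] [Monoid A] (x : σ → M) (y : σ → A) :
    Prop where
  mul_eq : ∀ {u v w}, x u + x v = x w → y u * y v = y w
  mul_eq_one : ∀ {u v}, x u + x v = 0 → y u * y v = 1

namespace RespectsAddTable_s10

section AddMonoid

variable {σ M A : Type*} [AddMonoid M] [Monoid A] {x : σ → M} {y : σ → A}

theorem of_addMonoidHom (f : M →+ Additive A) (x : σ → M) :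
    RespectsAddTable_s10 x (fun s => (f (x s)).toMul) where
  mul_eq h := by rw [← toMul_add, ← map_add, h]
  mul_eq_one h := by rw [← toMul_add, ← map_add, h, map_zero, toMul_zero]

theorem eq_one_of_eq_zero_s10 (h : RespectsAddTable_s10 x y) {s : σ} (hs : x s = 0) : y s = 1 := by
  have idempotent : y s * y s = y s := h.mul_eq (by rw [hs, add_zero])
  have involutive : y s * y s = 1 := h.mul_eq_one (by rw [hs, add_zero])
  exact idempotent.symm.trans involutive

end AddMonoid

section AddGroup

variable {σ M A : Type*} [AddGroup M] [Monoid A] {x : σ → M} {y : σ → A}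

theorem factorsThrough (h : RespectsAddTable_s10 x y) (hx : ∀ a ≠ 0, ∃ s, x s = a) :
    y.FactorsThrough x := by
  intro s t hst
  by_cases hs : x s = 0
  · rw [h.eq_one_of_eq_zero_s10 hs, h.eq_one_of_eq_zero_s10 (hst ▸ hs)]
  · obtain ⟨v, hv⟩ := hx (-x s) (neg_ne_zero.mpr hs)
    have left_inv : y s * y v = 1 := h.mul_eq_one (by rw [hv, add_neg_cancel])
    have right_inv : y v * y t = 1 := h.mul_eq_one (by rw [hv, hst, neg_add_cancel])
    exact left_inv_eq_right_inv left_inv right_inv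

theorem extend_apply (h : RespectsAddTable_s10 x y) (hx : ∀ a ≠ 0, ∃ s, x s = a) (s : σ) :
    Function.extend x y 1 (x s) = y s :=
  (h.factorsThrough hx).extend_apply 1 s

theorem extend_zero (h : RespectsAddTable_s10 x y) (hx : ∀ a ≠ 0, ∃ s, x s = a) :
    Function.extend x y 1 0 = 1 := by
  by_cases h0 : ∃ s, x s = 0
  · obtain ⟨s, hs⟩ := h0
    rw [← hs, h.extend_apply hx, h.eq_one_of_eq_zero_s10 hs]
  · exact Function.extend_apply' y (1 : M → A) 0 h0

theorem extend_add (h : RespectsAddTable_s10 x y) (hx : ∀ a ≠ 0, ∃ s, x s = a) (a b : M) :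
    Function.extend x y 1 (a + b) = Function.extend x y 1 a * Function.extend x y 1 b := by
  obtain rfl | ha := eq_or_ne a 0
  · rw [zero_add, h.extend_zero hx, one_mul]
  obtain rfl | hb := eq_or_ne b 0
  · rw [add_zero, h.extend_zero hx, mul_one]
  obtain ⟨u, rfl⟩ := hx a ha
  obtain ⟨v, rfl⟩ := hx b hb
  rw [h.extend_apply hx, h.extend_apply hx]
  by_cases huv : x u + x v = 0
  · rw [huv, h.extend_zero hx, h.mul_eq_one huv]
  · obtain ⟨w, hw⟩ := hx _ huv
    rw [← hw, h.extend_apply hx, h.mul_eq hw.symm]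

theorem exists_addMonoidHom (h : RespectsAddTable_s10 x y) (hx : ∀ a ≠ 0, ∃ s, x s = a) :
    ∃ f : M →+ Additive A, ∀ s, (f (x s)).toMul = y s :=
  ⟨{ toFun a := .ofMul (Function.extend x y 1 a)
     map_zero' := congrArg Additive.ofMul (h.extend_zero hx)
     map_add' a b := congrArg Additive.ofMul (h.extend_add hx a b) }, h.extend_apply hx⟩

end AddGroup

theorem exists_algHom {ι σ M R A : Type*} [Finite ι] [DecidableEq ι] [AddGroup M] [CommSemiring R]
    [CommSemiring A] [Algebra R A] {x : σ → M} {y : ι → σ → A}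
    (h : ∀ i, RespectsAddTable_s10 x (y i)) (hx : ∀ a ≠ 0, ∃ s, x s = a) :
    ∃ ψ : AddMonoidAlgebra R (ι → M) →ₐ[R] A,
      ∀ i s, ψ (.single (Pi.single i (x s)) 1) = y i s := by
  cases nonempty_fintype ι
  choose f hf using fun i => (h i).exists_addMonoidHom hx
  let g : (ι → M) →+ Additive A := .noncommPiCoprod f fun _ _ _ _ _ => AddCommute.all _ _
  have hg (i : ι) (a : M) : g (Pi.single i a) = f i a :=
    AddMonoidHom.noncommPiCoprod_single (N := fun _ : ι => M) f i a
  refine ⟨AddMonoidAlgebra.lift R A (ι → M) g.toMultiplicativeLeft, fun i s => ?_⟩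
  rw [AddMonoidAlgebra.lift_single, one_smul, ← hf, ← hg]
  rfl

end RespectsAddTable_s10

/-- The binomials `x_{iu} x_{iv} - x_{iw}` for `x u + x v = x w` and `x_{iu} x_{iv} - 1` for
`x u + x v = 0`, that is, `addRel` with the powers of `α` replaced by an arbitrary family `x`. -/
def addTableRel (ι R : Type*) {σ M : Type*} [CommRing R] [AddMonoid M] (x : σ → M) :
    Set (MvPolynomial (ι × σ) R) :=
  {p | ∃ (i : ι) (u v w : σ), x u + x v = x w ∧ p = X (i, u) * X (i, v) - X (i, w)} ∪
  {p | ∃ (i : ι) (u v : σ), x u + x v = 0 ∧ p = X (i, u) * X (i, v) - 1}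

theorem addTableRel_subset_ker_iff {ι R σ M A : Type*} [CommRing R] [AddMonoid M] [Ring A]
    {x : σ → M} {f : MvPolynomial (ι × σ) R →+* A} :
    addTableRel ι R x ⊆ RingHom.ker f ↔ ∀ i, RespectsAddTable_s10 x (fun s => f (X (i, s))) := by
  constructor
  · intro h i
    constructor
    · intro u v w huvw
      have hmem := h (.inl ⟨i, u, v, w, huvw, rfl⟩)
      rwa [SetLike.mem_coe, RingHom.mem_ker, map_sub, map_mul, sub_eq_zero] at hmem
    · intro u v huv
      have hmem := h (.inr ⟨i, u, v, huv, rfl⟩)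
      rwa [SetLike.mem_coe, RingHom.mem_ker, map_sub, map_mul, map_one, sub_eq_zero] at hmem
  · rintro h p (⟨i, u, v, w, huvw, rfl⟩ | ⟨i, u, v, huv, rfl⟩)
    · rw [SetLike.mem_coe, RingHom.mem_ker, map_sub, map_mul, (h i).mul_eq huvw, sub_self]
    · rw [SetLike.mem_coe, RingHom.mem_ker, map_sub, map_mul, map_one, (h i).mul_eq_one huv,
        sub_self]

section Presentation

variable {ι σ R M : Type*} [DecidableEq ι] [CommRing R]

theorem respectsAddTable_single [AddMonoid M] (x : σ → M) (i : ι) :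
    RespectsAddTable_s10 x
      (fun s => (AddMonoidAlgebra.single (Pi.single i (x s)) 1 : AddMonoidAlgebra R (ι → M))) :=
  .of_addMonoidHom ((AddMonoidAlgebra.of R (ι → M)).toAdditiveRight.comp
    (AddMonoidHom.single (fun _ => M) i)) x

theorem span_addTableRel_le_ker_aeval [AddCommMonoid M] (x : σ → M) :
    Ideal.span (addTableRel ι R x) ≤ RingHom.ker (aeval (fun s : ι × σ =>
      (AddMonoidAlgebra.single (Pi.single s.1 (x s.2)) 1 : AddMonoidAlgebra R (ι → M)))) := by
  rw [Ideal.span_le, ← RingHom.ker_coe_toRingHom]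
  refine addTableRel_subset_ker_iff.mpr fun i => ?_
  simpa only [RingHom.coe_coe, aeval_X] using respectsAddTable_single x i

theorem ker_aeval_le_span_addTableRel [Finite ι] [AddCommGroup M] (x : σ → M)
    (hx : ∀ a ≠ 0, ∃ s, x s = a) :
    RingHom.ker (aeval (fun s : ι × σ =>
      (AddMonoidAlgebra.single (Pi.single s.1 (x s.2)) 1 : AddMonoidAlgebra R (ι → M)))) ≤
      Ideal.span (addTableRel ι R x) := by
  set J := Ideal.span (addTableRel ι R x)
  have respects_mk : ∀ i, RespectsAddTable_s10 x (fun s => Ideal.Quotient.mk J (X (i, s))) := by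
    rw [← addTableRel_subset_ker_iff, Ideal.mk_ker]
    exact Ideal.subset_span
  obtain ⟨ψ, hψ⟩ := RespectsAddTable_s10.exists_algHom (R := R) respects_mk hx
  have comp_eq_mk : ψ.comp (aeval fun s : ι × σ => .single (Pi.single s.1 (x s.2)) 1) =
      Ideal.Quotient.mkₐ R J := by
    refine algHom_ext fun s => ?_
    rw [AlgHom.comp_apply, aeval_X, hψ, Ideal.Quotient.mkₐ_eq_mk]
  intro p hp
  rw [← Ideal.Quotient.eq_zero_iff_mem, ← Ideal.Quotient.mkₐ_eq_mk R, ← comp_eq_mk,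
    AlgHom.comp_apply, RingHom.mem_ker.mp hp, map_zero]

theorem ker_aeval_groupAlgebra_eq_addRel_span_general [Finite ι] [AddCommGroup M] (x : σ → M)
    (hx : ∀ a ≠ 0, ∃ s, x s = a) :
    RingHom.ker (aeval (fun s : ι × σ =>
      (AddMonoidAlgebra.single (Pi.single s.1 (x s.2)) 1 : AddMonoidAlgebra R (ι → M)))) =
      Ideal.span (addTableRel ι R x) :=
  (ker_aeval_le_span_addTableRel x hx).antisymm (span_addTableRel_le_ker_aeval x)

end Presentation

theorem addRel_eq_addTableRel (F : Type) [Field F] [Fintype F] (n : ℕ) (α : F) :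
    addRel F n α = addTableRel (Fin n) (ZMod 2)
      (fun j : Fin (Fintype.card F - 1) => α ^ (j.1 + 1)) :=
  rfl

/-- Let `φ : F₂[x_{ij}] → F₂[(F^n, +)]` be the `F₂`-algebra homomorphism
to the group algebra of the additive group `F^n` sending the variable `x_{ij}` to the
group-algebra basis element corresponding to the vector `αʲ · eᵢ ∈ F^n` (`eᵢ` the `i`-th
standard basis vector).  Then the kernel of `φ` is exactly the ideal
`J = ⟨⋃ᵢ R(T₊⁽ⁱ⁾)⟩` generated by the additive-table relations. -/
theorem ker_aeval_groupAlgebra_eq_addRel_span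
    (F : Type) [Field F] [Fintype F] [DecidableEq F] (n : ℕ) (hn : 0 < n) (α : F)
    (hprim : ∀ x : F, x ≠ 0 → ∃ j : Fin (Fintype.card F - 1), α ^ (j.1 + 1) = x) :
    RingHom.ker (MvPolynomial.aeval
        (fun s : Fin n × Fin (Fintype.card F - 1) =>
          (AddMonoidAlgebra.single (Pi.single s.1 (α ^ (s.2.1 + 1))) 1 :
            AddMonoidAlgebra (ZMod 2) (Fin n → F)))) =
      Ideal.span (addRel F n α) := by
  rw [addRel_eq_addTableRel]
  -- The statement reads the ring structure of `ZMod 2` off its field instance, not `ZMod.commRing`;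
  -- `convert` matches the two structures where `exact` times out.
  convert ker_aeval_groupAlgebra_eq_addRel_span_general (ι := Fin n) (R := ZMod 2) _ hprim
end
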